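/- Let f be a homeomorphism of the torus T² = ℝ²/ℤ² homotopic to the identity, with lift F : ℝ² → ℝ². For each integer n ≥ 1, let D_n = { (Fⁿ(z) − z)/n : z ∈ ℝ² } ⊆ ℝ². Then the sets D_n converge to the rotation set ρ(F) in Hausdorff distance as n → ∞. -/

import Mathlib

/-!
Write `S_n = {Fⁿ(z) − z}`, so that `D_n = n⁻¹ S_n`. All `D_n` lie in one fixed ball, because the
displacement of `F` is periodic. That `D_n` is eventually contained in any neighbourhood of `ρ(F)`
is then compactness, applied to the nested sets whose intersection defines `ρ(F)`
(`eventually_subset_thickening_rotSet`).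

For the converse inclusion, let `v ∈ ρ(F)`. Cutting a very long orbit segment whose mean
displacement is close to `v` into blocks of length `n` shows that `n v` is within distance `1` of the
convex hull of `S_n` (`near_convexHull_of_mem_rotSet`). It remains to see that the convex hull of
`S_n` stays within a distance of `S_n` that does not depend on `n`; after division by `n` this gives
`dist(v, D_n) ≤ 10 / n`. By Carathéodory's theorem (`convexHull_near`) it is enough to treat
segments with endpoints in `S_n` (`segment_near_displacement`), and this is where planar topology
enters.

Let `G = Fⁿ` and let `γ` be the image under `G` of a segment in the unit square `[0,1)²`. As `G` is
injective and commutes with integer translations, `γ` is disjoint from all its translates by nonzero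
integer vectors. Suppose that `γ` avoids the disc of radius `2` about a point `p` of the segment
joining its endpoints. Take the line through the endpoints as the horizontal axis. Some subarc of `γ`
is then an arch over the disc, with its feet on the axis on either side of `p` and otherwise on one
side of the axis, say above (`crossing`). An integer vector `w` moves the left foot of the arch into
the upper half of the disc, so `w` points upwards, and the part of the translated arch that leads
from there to its top leaves the arch, since that top is higher than anything on the arch. Hence the
arch meets its translate (`arch_upper`), a contradiction. The crossing is forced by a winding
number argument: the difference of the two paths is a function on a rectangle, and if it had no
zero it would have a continuous logarithm there, which its boundary values exclude
(`no_zero_free_extension`).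
-/

open Set Filter

/-- The rotation set of a lift `F` of a torus homeomorphism:
`ρ(F) = ⋂_N closure (⋃_{n>N} {(Fⁿ(z) − z)/n : z ∈ ℝ²})`. -/
def rotSet (F : ℝ × ℝ → ℝ × ℝ) : Set (ℝ × ℝ) :=
  ⋂ N : ℕ, closure (⋃ n : ℕ, ⋃ (_ : N < n),
    {p : ℝ × ℝ | ∃ z : ℝ × ℝ, p = (n : ℝ)⁻¹ • (F^[n] z - z)})

/-! ### A planar crossing criterion -/

/-- The winding number obstruction. The sets `S` and `S'` both join `x` to `y`. On `S` the function
`k` has positive real part, while on `S'` it goes from the lower to the upper half-plane without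
meeting the positive real axis, so a loop in `S ∪ S'` through `x` and `y` has nonzero winding
number. This is incompatible with the continuous logarithm of `k` that exists on the simply
connected plane. -/
theorem no_zero_free_extension (k : ℝ × ℝ → ℂ) (hk : Continuous k) (hk0 : ∀ p, k p ≠ 0)
    {S S' : Set (ℝ × ℝ)} (hS : IsPreconnected S) (hS' : IsPreconnected S')
    {x y : ℝ × ℝ} (hx : x ∈ S) (hy : y ∈ S) (hx' : x ∈ S') (hy' : y ∈ S')
    (hre : ∀ p ∈ S, 0 < (k p).re) (hxim : (k x).im < 0) (hyim : 0 < (k y).im)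
    (hslit : ∀ p ∈ S', (k p).im = 0 → (k p).re ≤ 0) : False := by
  obtain ⟨L, ⟨hLx, hL⟩, -⟩ := Complex.isCoveringMapOn_exp.existsUnique_continuousMap_lifts
    ⟨k, hk⟩ (Complex.exp_log (hk0 x)) (fun p => hk0 p)
  have hLe : ∀ p, Complex.exp (L p) = k p := fun p => congrFun hL p
  have hθ : Continuous fun p => (L p).im := Complex.continuous_im.comp L.continuous
  have hcos : ∀ p ∈ S, 0 < Real.cos (L p).im := by
    intro p hp
    have h := hre p hp
    rw [← hLe, Complex.exp_re] at h
    exact pos_of_mul_pos_right h (Real.exp_pos _).le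
  have hθx : (L x).im = (k x).arg := by rw [hLx, Complex.log_im]; rfl
  have hx0 : (L x).im < 0 := by rw [hθx]; exact Complex.arg_neg_iff.2 hxim
  have hx1 : -(Real.pi / 2) < (L x).im := by
    rw [hθx]; exact (abs_lt.1 (Complex.abs_arg_lt_pi_div_two_iff.2 (Or.inl (hre x hx)))).1
  have hsin : 0 < Real.sin (L y).im := by
    have h := hyim
    rw [← hLe, Complex.exp_im] at h
    exact pos_of_mul_pos_right h (Real.exp_pos _).le
  -- along `S` the argument cannot reach the zero `-π/2` of the cosine
  have hy1 : -(Real.pi / 2) < (L y).im := by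
    by_contra! h
    obtain ⟨p, hp, hpe⟩ := hS.intermediate_value hy hx hθ.continuousOn ⟨h, hx1.le⟩
    have := hcos p hp
    simp only at hpe
    rw [hpe, Real.cos_neg, Real.cos_pi_div_two] at this
    exact lt_irrefl _ this
  have hy0 : 0 < (L y).im := by
    by_contra! h
    exact absurd (Real.sin_nonpos_of_nonpos_of_neg_pi_le h (by linarith [Real.pi_pos])) hsin.not_ge
  obtain ⟨p, hp, hpe⟩ := hS'.intermediate_value hx' hy' hθ.continuousOn ⟨hx0.le, hy0.le⟩
  simp only at hpe
  have h1 : (k p).im = 0 := by rw [← hLe, Complex.exp_im, hpe]; simp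
  have h2 : 0 < (k p).re := by rw [← hLe, Complex.exp_re, hpe]; simp [Real.exp_pos]
  exact (hslit p hp h1).not_gt h2

/-! ### Arches and their translates -/

/-- An arch `(u, v)` over the disc of radius `2` about the origin, with both feet on the horizontal
axis, meets one of its translates by nonzero vectors of `Λ`, where `Λ` is any set of vectors coming
within `1 / √2` of every point of the plane. -/
theorem arch_upper {u v : ℝ → ℝ} (hu : Continuous u) (hv : Continuous v) {a b : ℝ} (hab : a ≤ b)
    (hua : u a < 0) (hub : 0 < u b) (hva : v a = 0) (hvb : v b = 0)
    (hv0 : ∀ t ∈ Icc a b, 0 ≤ v t)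
    (hfar : ∀ t ∈ Icc a b, 4 ≤ u t ^ 2 + v t ^ 2)
    {Λ : ℝ → ℝ → Prop}
    (hdense : ∀ α β : ℝ, ∃ ξ η, Λ ξ η ∧ (ξ - α) ^ 2 + (η - β) ^ 2 ≤ 1 / 2)
    (hdisj : ∀ ξ η, Λ ξ η → (ξ, η) ≠ (0, 0) → ∀ s ∈ Icc a b, ∀ t ∈ Icc a b,
      ¬ (u s - u t = ξ ∧ v s - v t = η)) : False := by
  obtain ⟨m, hm, hmax⟩ := isCompact_Icc.exists_isMaxOn (nonempty_Icc.2 hab) hv.continuousOn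
  -- the translate of the left foot of the arch lies in the disc of radius `1` about `(0, 1)`
  obtain ⟨ξ, η, hΛ, hξη⟩ := hdense (-u a) 1
  have hη : 0 < η := by nlinarith [sq_nonneg (ξ - -u a)]
  have hua2 : u a ≤ -2 := by
    have := hfar a (left_mem_Icc.2 hab)
    rw [hva] at this
    nlinarith
  have hub2 : 2 ≤ u b := by
    have := hfar b (right_mem_Icc.2 hab)
    rw [hvb] at this
    nlinarith
  have hξ1 : -1 < ξ + u a := by nlinarith [sq_nonneg (η - 1)]
  have hξ2 : ξ + u a < 1 := by nlinarith [sq_nonneg (η - 1)]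
  let c : ℝ → ℝ := fun s => max a (min b s)
  let d : ℝ → ℝ := fun t => max a (min m t)
  have hc : Continuous c := by fun_prop
  have hd : Continuous d := by fun_prop
  have hcm : ∀ s, c s ∈ Icc a b := fun s => ⟨le_max_left _ _, max_le hab (min_le_left _ _)⟩
  have hdm : ∀ t, d t ∈ Icc a b :=
    fun t => ⟨le_max_left _ _, max_le hab ((min_le_left _ _).trans hm.2)⟩
  have hca : c a = a := by simp [c]
  have hcb : c b = b := by simp [c, hab]
  have hda : d a = a := by simp [d]
  have hdmm : d m = m := by simp [d, hm.1]
  -- `i` times the difference between the arch and its translate, which starts at the left foot and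
  -- stops at the top; the times are clamped so that the function is defined on the whole plane
  refine no_zero_free_extension
    (fun p => ⟨-(v (c p.1) - v (d p.2) - η), u (c p.1) - u (d p.2) - ξ⟩) ?_ ?_
    (S := ({a} ×ˢ univ ∪ univ ×ˢ {m}) ∪ {b} ×ˢ univ) (S' := univ ×ˢ {a})
    (x := (a, a)) (y := (b, a)) ?_ ?_ ?_ ?_ ?_ ?_ ?_ ?_ ?_ ?_
  · rw [← Complex.equivRealProdCLM.comp_continuous_iff]
    simp only [Function.comp_def, Complex.equivRealProdCLM_apply]
    fun_prop
  · intro p h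
    have h1 := congrArg Complex.re h
    have h2 := congrArg Complex.im h
    simp only [Complex.zero_re, Complex.zero_im] at h1 h2
    refine hdisj ξ η hΛ ?_ _ (hcm p.1) _ (hdm p.2) ⟨by linarith, by linarith⟩
    intro h
    exact hη.ne' (Prod.ext_iff.1 h).2
  · refine IsPreconnected.union (b, m) (by simp) (by simp) (IsPreconnected.union (a, m)
      (by simp) (by simp) ?_ ?_) ?_
    · exact isPreconnected_singleton.prod isPreconnected_univ
    · exact isPreconnected_univ.prod isPreconnected_singleton
    · exact isPreconnected_singleton.prod isPreconnected_univ
  · exact isPreconnected_univ.prod isPreconnected_singleton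
  · simp
  · simp
  · simp
  · simp
  · rintro ⟨s, t⟩ (( ⟨h, -⟩ | ⟨-, h⟩) | ⟨h, -⟩) <;> simp only [mem_singleton_iff] at h <;> subst h <;>
      simp only
    · rw [hca, hva]; linarith [hv0 _ (hdm t)]
    · rw [hdmm]; linarith [show v (c s) ≤ v t from hmax (hcm s)]
    · rw [hcb, hvb]; linarith [hv0 _ (hdm t)]
  · simp only [hca, hda]; linarith
  · simp only [hcb, hda]; linarith
  · -- a point of the arch vertically below `(u a + ξ, η)` would be at distance `< 2` from the origin
    rintro ⟨s, t⟩ ⟨-, h⟩ him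
    simp only [mem_singleton_iff] at h him ⊢
    subst h
    rw [hda] at him
    rw [hda, hva]
    by_contra! hlt
    have h1 := hv0 _ (hcm s)
    have h2 := hfar _ (hcm s)
    have h3 : u (c s) = u t + ξ := by linarith
    rw [h3] at h2
    have h4 : η ≤ 7 / 4 := by nlinarith [sq_nonneg (ξ + u t)]
    have h5 : v (c s) ^ 2 ≤ η ^ 2 := pow_le_pow_left₀ h1 (by linarith) 2
    nlinarith

/-- A path `(u, v)` with endpoints on the horizontal axis on either side of the origin, which is
disjoint from its translates by the nonzero vectors of `Λ`, enters the disc of radius `2` about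
the origin. -/
theorem crossing {u v : ℝ → ℝ} (hu : Continuous u) (hv : Continuous v)
    (hu0 : u 0 ≤ 0) (hu1 : 0 ≤ u 1) (hv0 : v 0 = 0) (hv1 : v 1 = 0)
    {Λ : ℝ → ℝ → Prop}
    (hdense : ∀ α β : ℝ, ∃ ξ η, Λ ξ η ∧ (ξ - α) ^ 2 + (η - β) ^ 2 ≤ 1 / 2)
    (hdisj : ∀ ξ η, Λ ξ η → (ξ, η) ≠ (0, 0) → ∀ s ∈ Icc (0 : ℝ) 1, ∀ t ∈ Icc (0 : ℝ) 1,
      ¬ (u s - u t = ξ ∧ v s - v t = η)) :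
    ∃ t ∈ Icc (0 : ℝ) 1, u t ^ 2 + v t ^ 2 < 4 := by
  by_contra! hfar
  -- the first time `b` on the right half of the axis and, before it, the last time `a` on the left
  -- half: the axis is not met strictly between `a` and `b`
  obtain ⟨b, ⟨⟨hb, hvb⟩, hub⟩, hbmin⟩ :
      ∃ b, IsLeast {t | (t ∈ Icc (0 : ℝ) 1 ∧ v t = 0) ∧ 0 ≤ u t} b := by
    refine IsCompact.exists_isLeast ?_ ⟨1, ⟨by simp, hv1⟩, hu1⟩
    exact (isCompact_Icc.inter_right (isClosed_eq hv continuous_const)).inter_right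
      (isClosed_le continuous_const hu)
  obtain ⟨a, ⟨⟨ha, hva⟩, hua⟩, hamax⟩ :
      ∃ a, IsGreatest {t | (t ∈ Icc (0 : ℝ) b ∧ v t = 0) ∧ u t ≤ 0} a := by
    refine IsCompact.exists_isGreatest ?_ ⟨0, ⟨⟨le_rfl, hb.1⟩, hv0⟩, hu0⟩
    exact (isCompact_Icc.inter_right (isClosed_eq hv continuous_const)).inter_right
      (isClosed_le hu continuous_const)
  have hsub : Icc a b ⊆ Icc (0 : ℝ) 1 := Icc_subset_Icc ha.1 hb.2
  have hne : ∀ t ∈ Icc (0 : ℝ) 1, v t = 0 → u t ≠ 0 := by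
    intro t ht h1 h2
    have := hfar t ht
    rw [h1, h2] at this
    norm_num at this
  have hua' : u a < 0 := lt_of_le_of_ne hua (hne a (hsub ⟨le_rfl, ha.2⟩) hva)
  have hub' : 0 < u b := lt_of_le_of_ne hub (hne b hb hvb).symm
  have hin : ∀ t ∈ Ioo a b, v t ≠ 0 := by
    intro t ht h
    have ht1 : t ∈ Icc (0 : ℝ) 1 := hsub (Ioo_subset_Icc_self ht)
    rcases le_total 0 (u t) with h0 | h0
    · exact (hbmin ⟨⟨ht1, h⟩, h0⟩).not_gt ht.2
    · exact (hamax ⟨⟨⟨ht1.1, ht.2.le⟩, h⟩, h0⟩).not_gt ht.1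
  -- by the intermediate value theorem `v` has a constant sign between the two feet
  have hsign : (∀ t ∈ Icc a b, 0 ≤ v t) ∨ (∀ t ∈ Icc a b, v t ≤ 0) := by
    by_contra! hcon
    obtain ⟨⟨s, hs, hvs⟩, ⟨t, ht, hvt⟩⟩ := hcon
    have hI : ∀ r ∈ Icc a b, v r ≠ 0 → r ∈ Ioo a b := by
      intro r hr h
      refine ⟨lt_of_le_of_ne hr.1 ?_, lt_of_le_of_ne hr.2 ?_⟩
      · rintro rfl; exact h hva
      · rintro rfl; exact h hvb
    obtain ⟨r, hr, hr0⟩ := (isPreconnected_Ioo (a := a) (b := b)).intermediate_value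
      (hI s hs hvs.ne) (hI t ht hvt.ne') hv.continuousOn ⟨hvs.le, hvt.le⟩
    exact hin r hr hr0
  rcases hsign with h | h
  · exact arch_upper hu hv ha.2 hua' hub' hva hvb h (fun t ht => hfar t (hsub ht)) hdense
      (fun ξ η hΛ h0 s hs t ht => hdisj ξ η hΛ h0 s (hsub hs) t (hsub ht))
  · refine arch_upper (v := fun t => -v t) (Λ := fun ξ η => Λ ξ (-η)) hu hv.neg ha.2 hua' hub'
      (by simp [hva]) (by simp [hvb]) (fun t ht => by simpa using h t ht)
      (fun t ht => by simpa using hfar t (hsub ht)) ?_ ?_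
    · intro α β
      obtain ⟨ξ, η, h1, h2⟩ := hdense α (-β)
      exact ⟨ξ, -η, by simpa using h1, by linarith [h2, show (-η - β) ^ 2 = (η - -β) ^ 2 by ring]⟩
    · rintro ξ η hΛ h0 s hs t ht ⟨h1, h2⟩
      refine hdisj ξ (-η) hΛ ?_ s (hsub hs) t (hsub ht) ⟨h1, by linarith⟩
      simpa using h0

/-! ### Displacement sets are almost convex -/

theorem exists_unit_square_rep {G : ℝ × ℝ → ℝ × ℝ}
    (hG : ∀ (z : ℝ × ℝ) (v : ℤ × ℤ), G (z + ((v.1 : ℝ), (v.2 : ℝ))) = G z + ((v.1 : ℝ), (v.2 : ℝ)))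
    (x : ℝ × ℝ) :
    ∃ x' : ℝ × ℝ, x'.1 ∈ Ico (0 : ℝ) 1 ∧ x'.2 ∈ Ico (0 : ℝ) 1 ∧ G x' - x' = G x - x := by
  have h := hG x (-⌊x.1⌋, -⌊x.2⌋)
  refine ⟨x + (((-⌊x.1⌋ : ℤ) : ℝ), ((-⌊x.2⌋ : ℤ) : ℝ)), ?_, ?_, ?_⟩
  · have h1 := Int.floor_le x.1
    have h2 := Int.lt_floor_add_one x.1
    constructor <;> simp <;> linarith
  · have h1 := Int.floor_le x.2
    have h2 := Int.lt_floor_add_one x.2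
    constructor <;> simp <;> linarith
  · rw [h]; abel

/-- The constant is `3 = 2 + 1`: the image under `G` of a segment in the unit square comes within `2`
of each point of the segment joining its endpoints, and passing from values of `G` to displacements
costs at most the diameter `1` of the unit square for the sup distance. -/
theorem segment_near_displacement {G : ℝ × ℝ → ℝ × ℝ} (hc : Continuous G)
    (hinj : Function.Injective G)
    (hG : ∀ (z : ℝ × ℝ) (v : ℤ × ℤ), G (z + ((v.1 : ℝ), (v.2 : ℝ))) = G z + ((v.1 : ℝ), (v.2 : ℝ)))
    {a b p : ℝ × ℝ} (ha : a ∈ range fun z => G z - z) (hb : b ∈ range fun z => G z - z)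
    (hp : p ∈ segment ℝ a b) : ∃ s ∈ range fun z => G z - z, dist p s ≤ 3 := by
  obtain ⟨x₀, rfl⟩ := ha
  obtain ⟨y₀, rfl⟩ := hb
  obtain ⟨x, hx1, hx2, hx⟩ := exists_unit_square_rep hG x₀
  obtain ⟨y, hy1, hy2, hy⟩ := exists_unit_square_rep hG y₀
  simp only at hp
  rw [← hx, ← hy, segment_eq_image'] at hp
  obtain ⟨τ, hτ, rfl⟩ := hp
  let l : ℝ → ℝ × ℝ := fun t => (x.1 + t * (y.1 - x.1), x.2 + t * (y.2 - x.2))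
  have hl : Continuous l := by fun_prop
  have hmem : ∀ t ∈ Icc (0 : ℝ) 1, (l t).1 ∈ Ico (0 : ℝ) 1 ∧ (l t).2 ∈ Ico (0 : ℝ) 1 := by
    rintro t ⟨h0, h1⟩
    have h1' : 0 ≤ 1 - t := by linarith
    have key : ∀ c d : ℝ, c ∈ Ico (0 : ℝ) 1 → d ∈ Ico (0 : ℝ) 1 →
        c + t * (d - c) ∈ Ico (0 : ℝ) 1 := by
      intro c d hc hd
      have h := (convex_Ico (0 : ℝ) 1) hc hd h1' h0 (by ring)
      simpa only [smul_eq_mul, show (1 - t) * c + t * d = c + t * (d - c) by ring] using h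
    exact ⟨key _ _ hx1 hy1, key _ _ hx2 hy2⟩
  have hl0 : l 0 = x := by simp [l]
  have hl1 : l 1 = y := by simp [l]
  -- it suffices to approach the corresponding point of the segment from `G x` to `G y`
  suffices H : ∃ t ∈ Icc (0 : ℝ) 1,
      |(G (l t)).1 - ((G x).1 + τ * ((G y).1 - (G x).1))| ≤ 2 ∧
      |(G (l t)).2 - ((G x).2 + τ * ((G y).2 - (G x).2))| ≤ 2 by
    obtain ⟨t, ht, h1, h2⟩ := H
    refine ⟨_, ⟨l t, rfl⟩, ?_⟩
    obtain ⟨m1, m2⟩ := hmem t ht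
    obtain ⟨n1, n2⟩ := hmem τ hτ
    simp only [l, mem_Ico] at m1 m2 n1 n2
    rw [abs_le] at h1 h2
    rw [Prod.dist_eq, max_le_iff, Real.dist_eq, Real.dist_eq, abs_le, abs_le]
    simp only [l, Prod.fst_add, Prod.snd_add, Prod.fst_sub, Prod.snd_sub, Prod.smul_fst,
      Prod.smul_snd, smul_eq_mul] at h1 h2 ⊢
    refine ⟨⟨?_, ?_⟩, ?_, ?_⟩ <;> linarith
  by_cases hAB : G x = G y
  · refine ⟨0, by simp, ?_⟩
    simp [hl0, hAB]
  set A := G x with hA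
  set B := G y with hB
  set r : ℝ := √((B.1 - A.1) ^ 2 + (B.2 - A.2) ^ 2) with hr
  have hr2 : r ^ 2 = (B.1 - A.1) ^ 2 + (B.2 - A.2) ^ 2 := Real.sq_sqrt (by positivity)
  have hrpos : 0 < r := by
    refine Real.sqrt_pos.2 ?_
    by_contra! h
    refine hAB (Prod.ext ?_ ?_)
    · nlinarith [sq_nonneg (B.1 - A.1), sq_nonneg (B.2 - A.2)]
    · nlinarith [sq_nonneg (B.1 - A.1), sq_nonneg (B.2 - A.2)]
  -- `(e, g)` is the unit vector from `A` to `B`, which serves as the horizontal direction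
  obtain ⟨e, he⟩ : ∃ e, e = (B.1 - A.1) / r := ⟨_, rfl⟩
  obtain ⟨g, hg⟩ : ∃ g, g = (B.2 - A.2) / r := ⟨_, rfl⟩
  have he' : B.1 - A.1 = r * e := by rw [he]; field_simp
  have hg' : B.2 - A.2 = r * g := by rw [hg]; field_simp
  have heg : e ^ 2 + g ^ 2 = 1 := by
    rw [he', hg'] at hr2
    have : r ^ 2 * (e ^ 2 + g ^ 2 - 1) = 0 := by linarith
    have h := (mul_eq_zero.1 this).resolve_left (by positivity)
    linarith
  have hGl : Continuous fun t => G (l t) := hc.comp hl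
  have key := crossing
    (u := fun t => e * ((G (l t)).1 - (A.1 + τ * (B.1 - A.1)))
      + g * ((G (l t)).2 - (A.2 + τ * (B.2 - A.2))))
    (v := fun t => -g * ((G (l t)).1 - (A.1 + τ * (B.1 - A.1)))
      + e * ((G (l t)).2 - (A.2 + τ * (B.2 - A.2))))
    (Λ := fun ξ η => ∃ i j : ℤ, ξ = e * i + g * j ∧ η = -g * i + e * j)
    (by fun_prop) (by fun_prop) ?_ ?_ ?_ ?_ ?_ ?_
  · obtain ⟨t, ht, h⟩ := key
    refine ⟨t, ht, ?_⟩
    generalize (G (l t)).1 - (A.1 + τ * (B.1 - A.1)) = P at h ⊢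
    generalize (G (l t)).2 - (A.2 + τ * (B.2 - A.2)) = Q at h ⊢
    have h4 : P ^ 2 + Q ^ 2 < 4 := by
      have : (e * P + g * Q) ^ 2 + (-g * P + e * Q) ^ 2 = (e ^ 2 + g ^ 2) * (P ^ 2 + Q ^ 2) := by
        ring
      rw [this, heg, one_mul] at h
      exact h
    exact ⟨abs_le_of_sq_le_sq (by nlinarith [sq_nonneg Q]) (by norm_num),
      abs_le_of_sq_le_sq (by nlinarith [sq_nonneg P]) (by norm_num)⟩
  · simp only [hl0, ← hA, he', hg']
    have : e * (A.1 - (A.1 + τ * (r * e))) + g * (A.2 - (A.2 + τ * (r * g)))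
      = -(τ * r * (e ^ 2 + g ^ 2)) := by ring
    rw [this, heg]
    have := mul_nonneg hτ.1 hrpos.le
    linarith
  · simp only [hl1, ← hB]
    have : e * (B.1 - (A.1 + τ * (B.1 - A.1))) + g * (B.2 - (A.2 + τ * (B.2 - A.2)))
      = (1 - τ) * r * (e ^ 2 + g ^ 2) := by
        rw [show B.1 - (A.1 + τ * (B.1 - A.1)) = (1 - τ) * (B.1 - A.1) by ring,
          show B.2 - (A.2 + τ * (B.2 - A.2)) = (1 - τ) * (B.2 - A.2) by ring, he', hg']
        ring
    rw [this, heg]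
    have := mul_nonneg (sub_nonneg.2 hτ.2) hrpos.le
    linarith
  · simp only [hl0, ← hA, he', hg']; ring
  · simp only [hl1, ← hB]
    rw [show B.1 - (A.1 + τ * (B.1 - A.1)) = (1 - τ) * (B.1 - A.1) by ring,
          show B.2 - (A.2 + τ * (B.2 - A.2)) = (1 - τ) * (B.2 - A.2) by ring, he', hg']
    ring
  · intro α β
    refine ⟨_, _, ⟨round (e * α - g * β), round (g * α + e * β), rfl, rfl⟩, ?_⟩
    have h1 := abs_le.1 (abs_sub_round (e * α - g * β))
    have h2 := abs_le.1 (abs_sub_round (g * α + e * β))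
    generalize (round (e * α - g * β) : ℝ) = i at *
    generalize (round (g * α + e * β) : ℝ) = j at *
    have h3 : (e * i + g * j - α) ^ 2 + (-g * i + e * j - β) ^ 2
        = (e * α - g * β - i) ^ 2 + (g * α + e * β - j) ^ 2 := by
      linear_combination (i ^ 2 + j ^ 2 - α ^ 2 - β ^ 2) * heg
    rw [h3]
    nlinarith
  · -- `G` is injective, so distinct integer translates of a path in the unit square have
    -- disjoint images
    rintro ξ η ⟨i, j, rfl, rfl⟩ hne s hs t ht ⟨h1, h2⟩
    have e1 : (G (l s)).1 - (G (l t)).1 = i := by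
      linear_combination e * h1 - g * h2 - ((G (l s)).1 - (G (l t)).1 - i) * heg
    have e2 : (G (l s)).2 - (G (l t)).2 = j := by
      linear_combination g * h1 + e * h2 - ((G (l s)).2 - (G (l t)).2 - j) * heg
    have e3 : G (l s) = G (l t + ((((i, j) : ℤ × ℤ).1 : ℝ), (((i, j) : ℤ × ℤ).2 : ℝ))) := by
      rw [hG]
      refine Prod.ext ?_ ?_
      · simp only [Prod.fst_add]; linarith
      · simp only [Prod.snd_add]; linarith
    have e4 := hinj e3
    have f1 : (l s).1 = (l t).1 + i := by rw [e4]; rfl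
    have f2 : (l s).2 = (l t).2 + j := by rw [e4]; rfl
    obtain ⟨m1, m2⟩ := hmem s hs
    obtain ⟨n1, n2⟩ := hmem t ht
    have hi : i = 0 := by
      have h1 : (i : ℝ) < 1 := by linarith [m1.2, n1.1]
      have h2 : (-1 : ℝ) < i := by linarith [m1.1, n1.2]
      have h1' : i < 1 := by exact_mod_cast h1
      have h2' : -1 < i := by exact_mod_cast h2
      omega
    have hj : j = 0 := by
      have h1 : (j : ℝ) < 1 := by linarith [m2.2, n2.1]
      have h2 : (-1 : ℝ) < j := by linarith [m2.1, n2.2]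
      have h1' : j < 1 := by exact_mod_cast h1
      have h2' : -1 < j := by exact_mod_cast h2
      omega
    refine hne ?_
    simp [hi, hj]

/-- If segments with endpoints in `S` stay within `C` of `S`, then adding one more vertex to a
convex combination costs at most another `C`. -/
theorem finset_convexHull_near {S : Set (ℝ × ℝ)} {C : ℝ} (hC : 0 ≤ C)
    (hS : ∀ a ∈ S, ∀ b ∈ S, ∀ p ∈ segment ℝ a b, ∃ s ∈ S, dist p s ≤ C)
    (T : Finset (ℝ × ℝ)) (hT : (T : Set (ℝ × ℝ)) ⊆ S) :
    ∀ p ∈ convexHull ℝ (T : Set (ℝ × ℝ)), ∃ s ∈ S, dist p s ≤ T.card * C := by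
  classical
  induction T using Finset.induction_on with
  | empty => simp
  | insert a T haT ih =>
    intro p hp
    have haS : a ∈ S := hT (by simp)
    have hTS : (T : Set (ℝ × ℝ)) ⊆ S := fun z hz => hT (by simp [Finset.mem_coe.1 hz])
    rw [Finset.card_insert_of_notMem haT]
    push_cast
    rcases T.eq_empty_or_nonempty with rfl | hne
    · refine ⟨a, haS, ?_⟩
      have : p = a := by simpa using hp
      simp [this, hC]
    rw [Finset.coe_insert, convexHull_insert (by simpa using hne), mem_convexJoin] at hp
    obtain ⟨a', rfl, p', hp', α, β, hα, hβ, hαβ, rfl⟩ := hp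
    obtain ⟨s, hs, hd⟩ := ih hTS p' hp'
    obtain ⟨s', hs', hd'⟩ := hS a' haS s hs (α • a' + β • s) ⟨α, β, hα, hβ, hαβ, rfl⟩
    refine ⟨s', hs', (dist_triangle _ (α • a' + β • s) _).trans ?_⟩
    have h1 : dist (α • a' + β • p') (α • a' + β • s) ≤ T.card * C := by
      rw [dist_add_left, dist_smul₀, Real.norm_of_nonneg hβ]
      exact (mul_le_of_le_one_left dist_nonneg (by linarith)).trans hd
    linarith

theorem convexHull_near {S : Set (ℝ × ℝ)} {C : ℝ} (hC : 0 ≤ C)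
    (hS : ∀ a ∈ S, ∀ b ∈ S, ∀ p ∈ segment ℝ a b, ∃ s ∈ S, dist p s ≤ C) :
    ∀ p ∈ convexHull ℝ S, ∃ s ∈ S, dist p s ≤ 3 * C := by
  intro p hp
  rw [convexHull_eq_union] at hp
  simp only [mem_iUnion] at hp
  obtain ⟨T, hT, hai, hp⟩ := hp
  obtain ⟨s, hs, hd⟩ := finset_convexHull_near hC hS T hT p hp
  refine ⟨s, hs, hd.trans (mul_le_mul_of_nonneg_right ?_ hC)⟩
  have h1 := hai.card_le_finrank_succ
  have h2 := Submodule.finrank_le (vectorSpan ℝ (range ((↑) : T → ℝ × ℝ)))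
  have h3 : Module.finrank ℝ (ℝ × ℝ) = 2 := by simp
  rw [Fintype.card_coe] at h1
  have : T.card ≤ 3 := by omega
  exact_mod_cast this

/-! ### Bounded displacements and long orbits -/

theorem iterate_equivariant {f : ℝ × ℝ → ℝ × ℝ}
    (hf : ∀ (z : ℝ × ℝ) (v : ℤ × ℤ), f (z + ((v.1 : ℝ), (v.2 : ℝ))) = f z + ((v.1 : ℝ), (v.2 : ℝ)))
    (n : ℕ) (z : ℝ × ℝ) (v : ℤ × ℤ) :
    f^[n] (z + ((v.1 : ℝ), (v.2 : ℝ))) = f^[n] z + ((v.1 : ℝ), (v.2 : ℝ)) := by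
  induction n with
  | zero => rfl
  | succ n ih => rw [Function.iterate_succ_apply', ih, hf, ← Function.iterate_succ_apply' f]

theorem exists_displacement_bound {f : ℝ × ℝ → ℝ × ℝ} (hc : Continuous f)
    (hf : ∀ (z : ℝ × ℝ) (v : ℤ × ℤ), f (z + ((v.1 : ℝ), (v.2 : ℝ))) = f z + ((v.1 : ℝ), (v.2 : ℝ))) :
    ∃ M : ℝ, 0 ≤ M ∧ ∀ (n : ℕ) (z : ℝ × ℝ), ‖f^[n] z - z‖ ≤ n * M := by
  have hcpt : IsCompact (Icc (0 : ℝ) 1 ×ˢ Icc (0 : ℝ) 1) := isCompact_Icc.prod isCompact_Icc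
  obtain ⟨M, hM⟩ := hcpt.exists_bound_of_continuousOn (hc.sub continuous_id).continuousOn
  have h1 : ∀ z, ‖f z - z‖ ≤ M := by
    intro z
    obtain ⟨z', h1, h2, h⟩ := exists_unit_square_rep hf z
    rw [← h]
    exact hM z' ⟨Ico_subset_Icc_self h1, Ico_subset_Icc_self h2⟩
  refine ⟨M, (norm_nonneg _).trans (h1 0), fun n z => ?_⟩
  induction n with
  | zero => simp
  | succ n ih =>
    rw [Function.iterate_succ_apply', ← sub_add_sub_cancel _ (f^[n] z) z]
    refine (norm_add_le _ _).trans ?_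
    push_cast
    linarith [h1 (f^[n] z)]

/-- Here `M` bounds the displacement of `f`. A displacement along an orbit of length `m = n q + r`
is the sum of `q` displacements of `fⁿ` and of a remainder of norm at most `n M`, which is
negligible after multiplication by `n / m`. -/
theorem near_convexHull_of_mem_rotSet {f : ℝ × ℝ → ℝ × ℝ} {M : ℝ} (hM0 : 0 ≤ M)
    (hM : ∀ (n : ℕ) (z : ℝ × ℝ), ‖f^[n] z - z‖ ≤ n * M) {n : ℕ} (hn : 0 < n) {v : ℝ × ℝ}
    (hv : v ∈ rotSet f) :
    ∃ p ∈ convexHull ℝ (range fun z => f^[n] z - z), dist ((n : ℝ) • v) p ≤ 1 := by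
  have hnR : (0 : ℝ) < n := by exact_mod_cast hn
  obtain ⟨N, hN⟩ := exists_nat_ge (4 * (n : ℝ) ^ 2 * M)
  have hv' := mem_iInter.1 hv (N + n)
  obtain ⟨w, hw, hvw⟩ := Metric.mem_closure_iff.1 hv' (1 / (2 * n)) (by positivity)
  simp only [mem_iUnion, mem_ofPred_eq] at hw
  obtain ⟨m, hm, z, rfl⟩ := hw
  -- cut the orbit of length `m` into `q` blocks of length `n` and a remainder of length `r`
  set q := m / n with hq
  set r := m % n with hr
  have hqr : n * q + r = m := Nat.div_add_mod m n
  have hrn : r < n := Nat.mod_lt _ hn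
  have hq0 : 0 < q := Nat.div_pos (by omega) hn
  have hqR : (0 : ℝ) < q := by exact_mod_cast hq0
  have hmR : (0 : ℝ) < m := by
    have : 0 < m := by omega
    exact_mod_cast this
  have hNm : (N : ℝ) ≤ m := by
    have : N ≤ m := by omega
    exact_mod_cast this
  have hrR : (r : ℝ) ≤ n := by exact_mod_cast hrn.le
  have hqrR : (n : ℝ) * q + r = m := by exact_mod_cast hqr
  set s : ℕ → ℝ × ℝ := fun j => f^[n * j] z with hs
  set p : ℝ × ℝ := ∑ j ∈ Finset.range q, (q : ℝ)⁻¹ • (f^[n] (s j) - s j) with hp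
  have hpc : p ∈ convexHull ℝ (range fun z => f^[n] z - z) := by
    refine (convex_convexHull ℝ _).sum_mem (fun _ _ => by positivity) ?_
      (fun j _ => subset_convexHull ℝ _ ⟨s j, rfl⟩)
    simp [hqR.ne']
  have hsum : (q : ℝ) • p = s q - z := by
    rw [hp, ← Finset.smul_sum, smul_inv_smul₀ hqR.ne']
    have : ∀ j, f^[n] (s j) = s (j + 1) := by
      intro j
      simp only [hs]
      rw [← Function.iterate_add_apply, Nat.mul_succ, Nat.add_comm]
    simp only [this]
    rw [Finset.sum_range_sub]
    simp [hs]
  have hpn : ‖p‖ ≤ n * M := by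
    rw [hp]
    refine (norm_sum_le _ _).trans ?_
    refine (Finset.sum_le_card_nsmul _ _ ((q : ℝ)⁻¹ * (n * M)) ?_).trans ?_
    · intro j _
      rw [norm_smul, Real.norm_of_nonneg (by positivity)]
      exact mul_le_mul_of_nonneg_left (hM n _) (by positivity)
    · rw [Finset.card_range, nsmul_eq_mul, ← mul_assoc, mul_inv_cancel₀ hqR.ne', one_mul]
  set R : ℝ × ℝ := f^[m] z - s q with hR
  have hRn : ‖R‖ ≤ n * M := by
    have : f^[m] z = f^[r] (s q) := by
      simp only [hs]
      rw [← Function.iterate_add_apply, Nat.add_comm, hqr]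
    rw [hR, this]
    exact (hM r _).trans (mul_le_mul_of_nonneg_right hrR hM0)
  have hdec : (n : ℝ) • ((m : ℝ)⁻¹ • (f^[m] z - z)) - p
      = -((r : ℝ) / m) • p + ((n : ℝ) / m) • R := by
    have h1 : f^[m] z - z = (q : ℝ) • p + R := by rw [hsum, hR]; abel
    have h2 : (n : ℝ) * (m : ℝ)⁻¹ * q - 1 = -((r : ℝ) / m) := by
      field_simp
      linarith
    rw [h1, smul_smul, smul_add, smul_smul, ← h2, sub_smul, one_smul, div_eq_mul_inv]
    abel
  refine ⟨p, hpc, (dist_triangle _ ((n : ℝ) • ((m : ℝ)⁻¹ • (f^[m] z - z))) _).trans ?_⟩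
  have d1 : dist ((n : ℝ) • v) ((n : ℝ) • ((m : ℝ)⁻¹ • (f^[m] z - z))) ≤ 1 / 2 := by
    rw [dist_smul₀, Real.norm_of_nonneg hnR.le]
    calc (n : ℝ) * dist v ((m : ℝ)⁻¹ • (f^[m] z - z)) ≤ n * (1 / (2 * n)) :=
          mul_le_mul_of_nonneg_left hvw.le hnR.le
      _ = 1 / 2 := by field_simp
  have d2 : dist ((n : ℝ) • ((m : ℝ)⁻¹ • (f^[m] z - z))) p ≤ 1 / 2 := by
    rw [dist_eq_norm, hdec]
    refine (norm_add_le _ _).trans ?_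
    rw [norm_smul, norm_smul, norm_neg, Real.norm_of_nonneg (by positivity),
      Real.norm_of_nonneg (by positivity)]
    have k1 : (r : ℝ) / m * ‖p‖ ≤ n / m * (n * M) := by gcongr
    have k2 : (n : ℝ) / m * ‖R‖ ≤ n / m * (n * M) := by gcongr
    have k3 : (n : ℝ) / m * (n * M) ≤ 1 / 4 := by
      rw [div_mul_eq_mul_div, div_le_iff₀ hmR]
      nlinarith
    linarith
  linarith

theorem eventually_subset_thickening_rotSet {f : ℝ × ℝ → ℝ × ℝ} {M : ℝ}
    (hM : ∀ (n : ℕ) (z : ℝ × ℝ), ‖f^[n] z - z‖ ≤ n * M) {ε : ℝ} (hε : 0 < ε) :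
    ∃ N : ℕ, ∀ n > N, ∀ z, ∃ y ∈ rotSet f, dist ((n : ℝ)⁻¹ • (f^[n] z - z)) y < ε := by
  set V : ℕ → Set (ℝ × ℝ) := fun N => closure (⋃ n : ℕ, ⋃ (_ : N < n),
    {p : ℝ × ℝ | ∃ z : ℝ × ℝ, p = (n : ℝ)⁻¹ • (f^[n] z - z)}) with hV
  have hVsub : ∀ N, V N ⊆ Metric.closedBall 0 M := by
    intro N
    refine closure_minimal ?_ Metric.isClosed_closedBall
    simp only [iUnion_subset_iff]
    rintro n hn _ ⟨z, rfl⟩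
    have hnR : (0 : ℝ) < n := by exact_mod_cast (Nat.zero_le N).trans_lt hn
    rw [mem_closedBall_zero_iff, norm_smul, norm_inv, Real.norm_of_nonneg hnR.le,
      inv_mul_le_iff₀ hnR]
    exact hM n z
  have hanti : Antitone V := by
    intro N N' h
    refine closure_mono ?_
    simp only [iUnion_subset_iff]
    intro n hn
    exact subset_iUnion₂_of_subset n (h.trans_lt hn) Subset.rfl
  obtain ⟨N, hN⟩ := exists_subset_nhds_of_isCompact (V := V) hanti.directed_ge
    (fun N => (isCompact_closedBall 0 M).of_isClosed_subset isClosed_closure (hVsub N))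
    (U := Metric.thickening ε (rotSet f))
    (fun x hx => Metric.isOpen_thickening.mem_nhds (Metric.self_subset_thickening hε _ hx))
  refine ⟨N, fun n hn z => ?_⟩
  refine Metric.mem_thickening_iff.1 (hN (subset_closure ?_))
  simp only [mem_iUnion]
  exact ⟨n, hn, z, rfl⟩

/-! ### Hausdorff convergence -/

/-- For a lift `F` of a torus homeomorphism homotopic to the identity, the sets
`D_n = {(Fⁿ(z) − z)/n : z ∈ ℝ²}` converge to the rotation set `ρ(F)` in
Hausdorff distance as `n → ∞`. -/
theorem rotation_set_hausdorff_limit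
    (F : (ℝ × ℝ) ≃ₜ (ℝ × ℝ))
    (hF : ∀ (z : ℝ × ℝ) (v : ℤ × ℤ),
      F (z + ((v.1 : ℝ), (v.2 : ℝ))) = F z + ((v.1 : ℝ), (v.2 : ℝ))) :
    Tendsto
      (fun n : ℕ => Metric.hausdorffDist
        {p : ℝ × ℝ | ∃ z : ℝ × ℝ, p = (n : ℝ)⁻¹ • ((F : ℝ × ℝ → ℝ × ℝ)^[n] z - z)}
        (rotSet F))
      atTop (nhds 0) := by
  obtain ⟨M, hM0, hM⟩ := exists_displacement_bound F.continuous hF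
  rw [Metric.tendsto_atTop]
  intro ε hε
  obtain ⟨N₁, hN₁⟩ := eventually_subset_thickening_rotSet hM (half_pos hε)
  obtain ⟨N₂, hN₂⟩ := exists_nat_ge (10 / (ε / 2))
  refine ⟨max N₁ N₂ + 1, fun n hn => ?_⟩
  have hn1 : N₁ < n := (le_max_left _ _).trans_lt hn
  have hn2 : N₂ < n := (le_max_right _ _).trans_lt hn
  have hn0 : 0 < n := (Nat.zero_le _).trans_lt hn1
  have hnR : (0 : ℝ) < n := by exact_mod_cast hn0
  have hnε : 10 / (n : ℝ) ≤ ε / 2 := by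
    rw [div_le_iff₀ hnR, mul_comm, ← div_le_iff₀ (half_pos hε)]
    exact hN₂.trans (by exact_mod_cast hn2.le)
  rw [Real.dist_eq, sub_zero, abs_of_nonneg Metric.hausdorffDist_nonneg]
  refine lt_of_le_of_lt (Metric.hausdorffDist_le_of_mem_dist (half_pos hε).le ?_ ?_)
    (half_lt_self hε)
  · rintro _ ⟨z, rfl⟩
    obtain ⟨y, hy, hd⟩ := hN₁ n hn1 z
    exact ⟨y, hy, hd.le⟩
  · intro v hv
    obtain ⟨p, hp, hvp⟩ := near_convexHull_of_mem_rotSet hM0 hM hn0 hv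
    obtain ⟨s, ⟨z, rfl⟩, hps⟩ := convexHull_near (by norm_num : (0 : ℝ) ≤ 3)
      (fun a ha b hb p hp => segment_near_displacement (F.continuous.iterate n)
        (F.injective.iterate n) (iterate_equivariant hF n) ha hb hp) p hp
    refine ⟨_, ⟨z, rfl⟩, le_trans ?_ hnε⟩
    have h : dist ((n : ℝ) • v) ((F : ℝ × ℝ → ℝ × ℝ)^[n] z - z) ≤ 10 :=
      (dist_triangle _ p _).trans (by linarith)
    have h2 : dist v ((n : ℝ)⁻¹ • ((F : ℝ × ℝ → ℝ × ℝ)^[n] z - z))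
        = (n : ℝ)⁻¹ * dist ((n : ℝ) • v) ((F : ℝ × ℝ → ℝ × ℝ)^[n] z - z) := by
      conv_lhs => rw [← inv_smul_smul₀ hnR.ne' v]
      rw [dist_smul₀, norm_inv, Real.norm_of_nonneg hnR.le]
    rw [h2, inv_mul_eq_div]
    gcongr
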